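/- Let A be an n×n real symmetric matrix, Q an n×k real matrix, q_{k+1} ∈ ℝⁿ, β_{k+1} ∈ ℝ, E an n×k real matrix, and T a k×k real symmetric tridiagonal matrix such that A·Q = Q·T + β_{k+1}·q_{k+1}·e_kᵀ + E. Let ε > 0 with ε(n+4) ≤ 1, and suppose ‖E‖ ≤ k(2n^{3/2} + 7)‖A‖ε and every column of Q has Euclidean norm at most 1 + (n+4)ε. Let 0 < η ≤ ‖A‖ and suppose every eigenvalue of T lies in [λmin(A) − η, λmax(A) + η]. Let C ≥ 0 and f : ℝ → ℝ with |f(t)| ≤ C for all t ∈ [λmin(A) − η, λmax(A) + η], and let p be a real polynomial of degree less than k and δ a real number with δ ≤ C and |f(t) − p(t)| ≤ δ for all t ∈ [λmin(A) − η, λmax(A) + η]. Then, with q₁ = Q·e₁, ‖f(A)·q₁ − Q·f(T)·e₁‖ ≤ (k+2)δ + ε · (41·C·k⁴·n^{3/2}·‖A‖)/η. -/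

import Mathlib

/-! Write `A = V diag(λ) Vᵀ`, `T = W diag(μ) Wᵀ`. The error splits as
`(f - p)(A) q₁ + (p(A) q₁ - Q p(T) e₁) + Q (p - f)(T) e₁`.

All `λ i` and `μ j` lie in the interval `[λmin(A) - η, λmax(A) + η]`, where `|f - p| ≤ δ`, so the
two outer terms are at most `(1 + √k)(1 + (n + 4)ε) δ`, using `‖Q u‖ ≤ √k max_j ‖Q_j‖ ‖u‖`. The part
carrying `(n + 4)ε` is absorbed in the rounding term through `δ ≤ C` and `η ≤ ‖A‖`.

For the middle term, the Lanczos relation is a Sylvester equation for `G = Vᵀ Q W`: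
`(λ i - μ j) G i j = (Vᵀ E W) i j + β (Vᵀ q_{k+1}) i * W (last) j`. Hence `Vᵀ (p(A) q₁ - Q p(T) e₁)` has
the entries `∑ j, p[λ i, μ j] * W 0 j * (Vᵀ E W) i j` with divided differences `p[s, t]`. The vector
`q_{k+1}` disappears: `p[λ i, ·]` is zero or has degree `< k - 1`, and a polynomial `r` of degree
`< k - 1` in the tridiagonal `T` has `e_kᵀ r(T) e₁ = 0` (`poly_residual`). By Cauchy-Schwarz the norm of
this vector is at most `max |p[s, t]| * √k ‖E‖` (`vecNorm_hadamard_le`).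

The divided differences are bounded by `max |p'|`. On `[-1, 1]`, expand a polynomial bounded by `M`
in Chebyshev polynomials, `P = ∑ c_i T_i` with `i < k`. Parseval gives `∑ c_i² ≤ 2 M²`, and
`|T_i'| ≤ i²`, so `P'² ≤ 2 M² k⁵` (`cheb_deriv_sq_le`). Since the interval has length at least `2η`,
rescaling costs a factor at most `1 / η`. With `|p| ≤ 2C` the middle term is at most `3 C k³ ‖E‖ / η`,
and `2 n^{3/2} + 7 ≤ 9 n^{3/2}` finishes the estimate, with `27 + 10 ≤ 41`.
-/

open Matrix Polynomial Set

/-- Euclidean norm of a vector in `ℝⁿ`. -/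
noncomputable def vecNorm {n : ℕ} (v : Fin n → ℝ) : ℝ :=
  Real.sqrt (∑ i, v i ^ 2)

/-- Spectral (operator) norm of a real matrix. -/
noncomputable def matNorm {m n : ℕ} (A : Matrix (Fin m) (Fin n) ℝ) : ℝ :=
  sSup {c : ℝ | ∃ v : Fin n → ℝ, vecNorm v ≤ 1 ∧ c = vecNorm (A.mulVec v)}

/-- Largest eigenvalue of a square real matrix. -/
noncomputable def lmax {n : ℕ} (A : Matrix (Fin n) (Fin n) ℝ) : ℝ :=
  sSup {μ : ℝ | ∃ v : Fin n → ℝ, v ≠ 0 ∧ A.mulVec v = μ • v}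

/-- Smallest eigenvalue of a square real matrix. -/
noncomputable def lmin {n : ℕ} (A : Matrix (Fin n) (Fin n) ℝ) : ℝ :=
  sInf {μ : ℝ | ∃ v : Fin n → ℝ, v ≠ 0 ∧ A.mulVec v = μ • v}

/-- A matrix is tridiagonal if `T i j = 0` whenever `|i - j| > 1`. -/
def IsTridiagonal {k : ℕ} (T : Matrix (Fin k) (Fin k) ℝ) : Prop :=
  ∀ i j : Fin k, 1 < |(i : ℤ) - (j : ℤ)| → T i j = 0

/-- The matrix function `f(A)` of a real symmetric matrix, defined through the
eigendecomposition `A = V Λ Vᵀ` as `V f(Λ) Vᵀ`. -/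
noncomputable def matFun {n : ℕ} {A : Matrix (Fin n) (Fin n) ℝ} (hA : A.IsHermitian)
    (f : ℝ → ℝ) : Matrix (Fin n) (Fin n) ℝ :=
  (hA.eigenvectorUnitary : Matrix (Fin n) (Fin n) ℝ) * Matrix.diagonal (f ∘ hA.eigenvalues) *
    star (hA.eigenvectorUnitary : Matrix (Fin n) (Fin n) ℝ)

/-- The `i`-th Chebyshev polynomial of the first kind, shifted and stretched to the range
`[lmin A - η, lmax A + η]`: with `r_max = lmax A + η`, `r_min = lmin A - η` and
`δ = 2 / (r_max - r_min)`, this is `y ↦ T_i (δ (y - r_min) - 1)`. -/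
noncomputable def shiftedCheb {n : ℕ} (A : Matrix (Fin n) (Fin n) ℝ) (η : ℝ) (i : ℕ) :
    Polynomial ℝ :=
  (Polynomial.Chebyshev.T ℝ i).comp
    (Polynomial.C (2 / ((lmax A + η) - (lmin A - η))) *
      (Polynomial.X - Polynomial.C (lmin A - η)) - 1)


/-! ### A Markov-type inequality from Chebyshev expansions -/

/-- A weak form of Markov's inequality: Cauchy-Schwarz applied to the differentiated Chebyshev
expansion of `P`. The exponent is `5` instead of the optimal `4`. -/
theorem cheb_deriv_sq_le (P : ℝ[X]) (k : ℕ) (hdeg : P.degree < k) (M : ℝ)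
    (hP : ∀ x ∈ Icc (-1 : ℝ) 1, |P.eval x| ≤ M) (x : ℝ) (hx : |x| ≤ 1) :
    (P.derivative.eval x) ^ 2 ≤ 2 * M ^ 2 * (k : ℝ) ^ 5 := by
  have hmem : P ∈ degreeLT ℝ k := by rwa [mem_degreeLT]
  rw [← Sequence.span_degreeLT (Chebyshev.chebyshevTsequence ℝ) (by simp),
    show Set.Iio k = Finset.range k by simp,
    Submodule.mem_span_image_finset_iff_exists_fun'] at hmem
  obtain ⟨c, hc⟩ := hmem
  have hc' : P = ∑ i ∈ Finset.range k, c i • Chebyshev.T ℝ i := hc.symm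
  have hev (y : ℝ) : P.eval y = ∑ i ∈ Finset.range k, c i * (Chebyshev.T ℝ i).eval y := by
    simp [hc', eval_finsetSum]
  have hder : P.derivative.eval x
      = ∑ i ∈ Finset.range k, c i * (Chebyshev.T ℝ i).derivative.eval x := by
    simp [hc', eval_finsetSum]
  have hTder (i : ℕ) : |(Chebyshev.T ℝ i).derivative.eval x| ≤ (i : ℝ) ^ 2 := by
    have h := Chebyshev.abs_iterate_derivative_T_real_le i 1 hx
    have h1 : (Chebyshev.T ℝ i).derivative.eval 1 = (i : ℝ) ^ 2 := by
      rw [Chebyshev.T_derivative_eq_U]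
      simp [sq]
    simpa [h1] using h
  -- Parseval's identity for the weight `1 / √(1 - y²)`.
  have hpars : ∫ y, P.eval y ^ 2 ∂Chebyshev.measureT
      = ∑ i ∈ Finset.range k, c i ^ 2 *
        ∫ y, (Chebyshev.T ℝ i).eval y * (Chebyshev.T ℝ i).eval y ∂Chebyshev.measureT := by
    have h1 (y : ℝ) : P.eval y ^ 2 = ∑ i ∈ Finset.range k, ∑ j ∈ Finset.range k,
        (c i * c j) * ((Chebyshev.T ℝ i).eval y * (Chebyshev.T ℝ j).eval y) := by
      rw [hev, sq, Finset.sum_mul_sum]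
      refine Finset.sum_congr rfl fun i _ => Finset.sum_congr rfl fun j _ => by ring
    simp_rw [h1]
    rw [MeasureTheory.integral_finsetSum _ fun i _ =>
      Chebyshev.integrable_measureT (by fun_prop)]
    refine Finset.sum_congr rfl fun i hi => ?_
    rw [MeasureTheory.integral_finsetSum _ fun j _ =>
      Chebyshev.integrable_measureT (by fun_prop)]
    simp_rw [MeasureTheory.integral_const_mul]
    rw [Finset.sum_eq_single i]
    · ring
    · intro j _ hj
      rw [Chebyshev.integral_eval_T_real_mul_eval_T_real_measureT_of_ne hj.symm, mul_zero]
    · exact fun h => absurd hi h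
  -- The squared norms are `π` for `i = 0` and `π / 2` otherwise.
  have hnorm (i : ℕ) : Real.pi / 2 ≤
      ∫ y, (Chebyshev.T ℝ i).eval y * (Chebyshev.T ℝ i).eval y ∂Chebyshev.measureT := by
    rcases eq_or_ne i 0 with rfl | hi
    · have := Chebyshev.integral_eval_T_real_mul_self_measureT_zero
      push_cast
      rw [this]
      linarith [Real.pi_pos]
    · rw [Chebyshev.integral_T_real_mul_self_measureT_of_ne_zero hi]
  have hup : ∫ y, P.eval y ^ 2 ∂Chebyshev.measureT ≤ M ^ 2 * Real.pi := by
    rw [Chebyshev.integral_measureT_eq_integral_cos]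
    calc ∫ θ in (0 : ℝ)..Real.pi, P.eval (Real.cos θ) ^ 2
        ≤ ∫ θ in (0 : ℝ)..Real.pi, M ^ 2 := by
          apply intervalIntegral.integral_mono_on Real.pi_pos.le
          · exact Continuous.intervalIntegrable (by fun_prop) _ _
          · simp
          · intro θ _
            exact sq_le_sq' (abs_le.mp (hP _ ⟨Real.neg_one_le_cos _, Real.cos_le_one _⟩)).1
              (abs_le.mp (hP _ ⟨Real.neg_one_le_cos _, Real.cos_le_one _⟩)).2
      _ = M ^ 2 * Real.pi := by simp [mul_comm]
  have hcsum : ∑ i ∈ Finset.range k, c i ^ 2 ≤ 2 * M ^ 2 := by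
    have : (∑ i ∈ Finset.range k, c i ^ 2) * (Real.pi / 2) ≤ M ^ 2 * Real.pi := by
      rw [Finset.sum_mul]
      refine le_trans (Finset.sum_le_sum fun i _ => ?_) (hpars ▸ hup)
      exact mul_le_mul_of_nonneg_left (hnorm i) (sq_nonneg _)
    nlinarith [Real.pi_pos]
  have hTsum : ∑ i ∈ Finset.range k, ((Chebyshev.T ℝ i).derivative.eval x) ^ 2
      ≤ (k : ℝ) ^ 5 := by
    calc _ ≤ ∑ i ∈ Finset.range k, (k : ℝ) ^ 4 := by
          refine Finset.sum_le_sum fun i hi => ?_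
          have hik : (i : ℝ) ≤ k := by exact_mod_cast (Finset.mem_range.mp hi).le
          calc _ ≤ ((i : ℝ) ^ 2) ^ 2 := sq_le_sq' (abs_le.mp (hTder i)).1 (abs_le.mp (hTder i)).2
            _ = (i : ℝ) ^ 4 := by ring
            _ ≤ (k : ℝ) ^ 4 := by gcongr
      _ = _ := by simp; ring
  rw [hder]
  refine (Finset.sum_mul_sq_le_sq_mul_sq _ _ _).trans ?_
  exact mul_le_mul hcsum hTsum (Finset.sum_nonneg fun _ _ => sq_nonneg _) (by positivity)

/-- `cheb_deriv_sq_le` transported to `[a, b]` by the affine map from `[-1, 1]`, whose slope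
`(b - a) / 2` is at least `η`. -/
theorem deriv_sq_le (p : ℝ[X]) (k : ℕ) (hdeg : p.natDegree < k) (M a b η : ℝ) (hη : 0 < η)
    (hab : 2 * η ≤ b - a) (hp : ∀ t ∈ Icc a b, |p.eval t| ≤ M) (t : ℝ) (ht : t ∈ Icc a b) :
    (p.derivative.eval t) ^ 2 ≤ 2 * M ^ 2 * (k : ℝ) ^ 5 / η ^ 2 := by
  set h : ℝ := (b - a) / 2 with hh
  have hηh : η ≤ h := by linarith
  have h0 : 0 < h := hη.trans_le hηh
  set L : ℝ[X] := C h * X + C ((a + b) / 2) with hL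
  have hLe (y : ℝ) : L.eval y = h * y + (a + b) / 2 := by simp [hL]
  have hLd : L.natDegree ≤ 1 := natDegree_linear_le
  have key := cheb_deriv_sq_le (p.comp L) k (by
    refine lt_of_le_of_lt degree_le_natDegree ?_
    have : (p.comp L).natDegree ≤ p.natDegree * 1 :=
      natDegree_comp_le.trans (Nat.mul_le_mul_left _ hLd)
    exact_mod_cast (by omega : (p.comp L).natDegree < k)) M
    (fun y hy => by
      rw [eval_comp, hLe]
      apply hp
      constructor <;> nlinarith [hy.1, hy.2])
    ((t - (a + b) / 2) / h) (by
      rw [abs_le, le_div_iff₀ h0, div_le_iff₀ h0]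
      constructor <;> linarith [ht.1, ht.2])
  have h1 : h * ((t - (a + b) / 2) / h) + (a + b) / 2 = t := by field_simp; ring
  have h2 : (p.comp L).derivative.eval ((t - (a + b) / 2) / h) = h * p.derivative.eval t := by
    rw [derivative_comp, eval_mul, eval_comp, hLe, h1]
    simp [hL]
  rw [h2, mul_pow] at key
  rw [le_div_iff₀ (by positivity)]
  refine le_trans ?_ key
  rw [mul_comm]
  gcongr

/-- `(p /ₘ (X - C s)).eval t` is the divided difference `p[s, t]`, equal to `p'(s)` when `t = s`, so
the mean value inequality bounds it by the maximum of `|p'|`. -/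
theorem divByMonic_sq_le (p : ℝ[X]) (k : ℕ) (hdeg : p.natDegree < k) (M a b η : ℝ) (hη : 0 < η)
    (hab : 2 * η ≤ b - a) (hp : ∀ t ∈ Icc a b, |p.eval t| ≤ M)
    (s t : ℝ) (hs : s ∈ Icc a b) (ht : t ∈ Icc a b) :
    ((p /ₘ (X - C s)).eval t) ^ 2 ≤ 2 * M ^ 2 * (k : ℝ) ^ 5 / η ^ 2 := by
  have hdec : (X - C s) * (p /ₘ (X - C s)) = p - C (p.eval s) := by
    have := modByMonic_add_div p (X - C s)
    rw [modByMonic_X_sub_C_eq_C_eval] at this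
    linear_combination this
  have hder := deriv_sq_le p k hdeg M a b η hη hab hp
  rcases eq_or_ne t s with rfl | hne
  · have : p.derivative.eval t = (p /ₘ (X - C t)).eval t := by
      have h := congrArg (fun r : ℝ[X] => r.derivative.eval t) hdec
      simpa using h.symm
    rw [← this]
    exact hder t ht
  · have hmul : (t - s) * (p /ₘ (X - C s)).eval t = p.eval t - p.eval s := by
      have h := congrArg (fun r : ℝ[X] => r.eval t) hdec
      simpa using h
    have hB : ∀ u ∈ Icc a b, ‖p.derivative.eval u‖ ≤ √(2 * M ^ 2 * (k : ℝ) ^ 5 / η ^ 2) :=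
      fun u hu => Real.abs_le_sqrt (hder u hu)
    have hmvt := Convex.norm_image_sub_le_of_norm_hasDerivWithin_le
      (f := fun u => p.eval u) (fun u _ => (p.hasDerivAt u).hasDerivWithinAt) hB
      (convex_Icc a b) hs ht
    rw [← hmul, norm_mul, mul_comm] at hmvt
    have := le_of_mul_le_mul_right hmvt (norm_pos_iff.mpr (sub_ne_zero.mpr hne))
    exact (Real.sqrt_le_sqrt_iff (by positivity)).mp (by simpa [Real.sqrt_sq_eq_abs] using this)

/-! ### Euclidean and spectral norms -/

theorem vecNorm_eq {n : ℕ} (v : Fin n → ℝ) : vecNorm v = ‖WithLp.toLp 2 v‖ := by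
  simp [vecNorm, EuclideanSpace.norm_eq]

theorem vecNorm_nonneg {n : ℕ} (v : Fin n → ℝ) : 0 ≤ vecNorm v := Real.sqrt_nonneg _

theorem vecNorm_sq {n : ℕ} (v : Fin n → ℝ) : vecNorm v ^ 2 = ∑ i, v i ^ 2 :=
  Real.sq_sqrt (Finset.sum_nonneg fun _ _ => sq_nonneg _)

theorem vecNorm_le_of_sq {n : ℕ} {v : Fin n → ℝ} {c : ℝ} (hc : 0 ≤ c)
    (h : ∑ i, v i ^ 2 ≤ c ^ 2) : vecNorm v ≤ c :=
  Real.sqrt_le_iff.mpr ⟨hc, h⟩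

theorem vecNorm_add_le {n : ℕ} (v w : Fin n → ℝ) : vecNorm (v + w) ≤ vecNorm v + vecNorm w := by
  simpa [vecNorm_eq] using norm_add_le (WithLp.toLp 2 v) (WithLp.toLp 2 w)

theorem vecNorm_orth {n : ℕ} {V : Matrix (Fin n) (Fin n) ℝ} (hV : Vᵀ * V = 1) (x : Fin n → ℝ) :
    vecNorm (V *ᵥ x) = vecNorm x := by
  have h (y : Fin n → ℝ) : ∑ i, y i ^ 2 = y ⬝ᵥ y := by simp [dotProduct, sq]
  rw [vecNorm, vecNorm, h, h, dotProduct_mulVec, vecMul_mulVec, ← mulVec_transpose]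
  simp [hV]

theorem vecNorm_diagonal_le {n : ℕ} {d : Fin n → ℝ} {δ : ℝ} (hδ : 0 ≤ δ) (hd : ∀ i, |d i| ≤ δ)
    (x : Fin n → ℝ) : vecNorm (diagonal d *ᵥ x) ≤ δ * vecNorm x := by
  refine vecNorm_le_of_sq (mul_nonneg hδ (vecNorm_nonneg _)) ?_
  rw [mul_pow, vecNorm_sq, Finset.mul_sum]
  refine Finset.sum_le_sum fun i _ => ?_
  rw [mulVec_diagonal, mul_pow]
  exact mul_le_mul_of_nonneg_right (sq_le_sq' (abs_le.mp (hd i)).1 (abs_le.mp (hd i)).2)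
    (sq_nonneg _)

theorem vecNorm_mulVec_le_of_col {n k : ℕ} {Q : Matrix (Fin n) (Fin k) ℝ} {c : ℝ} (hc : 0 ≤ c)
    (hQ : ∀ j, vecNorm (fun i => Q i j) ≤ c) (u : Fin k → ℝ) :
    vecNorm (Q *ᵥ u) ≤ √k * c * vecNorm u := by
  refine vecNorm_le_of_sq (by positivity [vecNorm_nonneg u]) ?_
  calc ∑ i, (Q *ᵥ u) i ^ 2 ≤ ∑ i, (∑ j, Q i j ^ 2) * ∑ j, u j ^ 2 :=
        Finset.sum_le_sum fun i _ => Finset.sum_mul_sq_le_sq_mul_sq Finset.univ (Q i) u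
    _ = (∑ j, ∑ i, Q i j ^ 2) * ∑ j, u j ^ 2 := by rw [← Finset.sum_mul, Finset.sum_comm]
    _ ≤ (∑ _j : Fin k, c ^ 2) * ∑ j, u j ^ 2 := by
        refine mul_le_mul_of_nonneg_right (Finset.sum_le_sum fun j _ => ?_)
          (Finset.sum_nonneg fun _ _ => sq_nonneg _)
        rw [← vecNorm_sq fun i => Q i j]
        exact pow_le_pow_left₀ (vecNorm_nonneg _) (hQ j) 2
    _ = (√k * c * vecNorm u) ^ 2 := by
        rw [mul_pow, mul_pow, Real.sq_sqrt (Nat.cast_nonneg k), vecNorm_sq]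
        simp

theorem vecNorm_mulVec_le_matNorm {m n : ℕ} (A : Matrix (Fin m) (Fin n) ℝ) {v : Fin n → ℝ}
    (hv : vecNorm v ≤ 1) : vecNorm (A *ᵥ v) ≤ matNorm A := by
  -- The supremum defining `matNorm` needs a bound to be meaningful; the column norms give one.
  refine le_csSup ⟨√n * ∑ j, vecNorm (fun i => A i j), ?_⟩ ⟨v, hv, rfl⟩
  rintro _ ⟨w, hw, rfl⟩
  have hc : 0 ≤ ∑ j, vecNorm (fun i => A i j) := Finset.sum_nonneg fun _ _ => vecNorm_nonneg _
  refine (vecNorm_mulVec_le_of_col hc (fun j => ?_) w).trans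
    (mul_le_of_le_one_right (by positivity) hw)
  exact Finset.single_le_sum (f := fun j => vecNorm (fun i => A i j))
    (fun _ _ => vecNorm_nonneg _) (Finset.mem_univ j)

theorem matNorm_nonneg {m n : ℕ} (A : Matrix (Fin m) (Fin n) ℝ) : 0 ≤ matNorm A := by
  refine (vecNorm_nonneg _).trans (vecNorm_mulVec_le_matNorm A (v := 0) ?_)
  simp [vecNorm]

/-! ### Eigenbases -/

/-- The spectral theorem, packaged with a real orthogonal matrix, together with the identification of
the eigenvalue set used in `lmin` and `lmax`. -/
theorem exists_eigenbasis {n : ℕ} {A : Matrix (Fin n) (Fin n) ℝ} (hA : A.IsHermitian) :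
    ∃ (V : Matrix (Fin n) (Fin n) ℝ) (lam : Fin n → ℝ), Vᵀ * V = 1 ∧ V * Vᵀ = 1 ∧
      A = V * diagonal lam * Vᵀ ∧ (∀ f : ℝ → ℝ, matFun hA f = V * diagonal (f ∘ lam) * Vᵀ) ∧
      {μ : ℝ | ∃ v : Fin n → ℝ, v ≠ 0 ∧ A.mulVec v = μ • v} = Set.range lam := by
  have hst : star (hA.eigenvectorUnitary : Matrix (Fin n) (Fin n) ℝ)
      = (hA.eigenvectorUnitary : Matrix (Fin n) (Fin n) ℝ)ᵀ := by
    rw [star_eq_conjTranspose, conjTranspose_eq_transpose_of_trivial]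
  refine ⟨hA.eigenvectorUnitary, hA.eigenvalues, ?_, ?_, ?_, ?_, ?_⟩
  · rw [← hst]; exact Unitary.coe_star_mul_self _
  · rw [← hst]; exact Unitary.coe_mul_star_self _
  · rw [← hst]
    exact hA.spectral_theorem
  · intro f
    rw [← hst]; rfl
  · rw [← hA.spectrum_real_eq_range_eigenvalues]
    ext μ
    rw [← spectrum_toLin', ← Module.End.hasEigenvalue_iff_mem_spectrum]
    constructor
    · rintro ⟨v, hv, h⟩
      exact Module.End.hasEigenvalue_of_hasEigenvector
        (Module.End.hasEigenvector_iff.mpr ⟨Module.End.mem_eigenspace_iff.mpr (by simpa using h), hv⟩)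
    · intro h
      obtain ⟨v, hv⟩ := h.exists_hasEigenvector
      exact ⟨v, hv.2, by simpa using hv.apply_eq_smul⟩

/-! ### The residual of a polynomial in the Lanczos relation -/

theorem tridiagonal_pow_apply_zero {k : ℕ} (hk : 0 < k) {T : Matrix (Fin k) (Fin k) ℝ}
    (hT : IsTridiagonal T) (m : ℕ) (i : Fin k) (hi : m < (i : ℕ)) : (T ^ m) i ⟨0, hk⟩ = 0 := by
  induction m generalizing i with
  | zero => 
    rw [pow_zero, one_apply_ne]
    intro h
    simp [h] at hi
  | succ m ih =>
    rw [pow_succ', mul_apply]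
    refine Finset.sum_eq_zero fun j _ => ?_
    by_cases hj : m < (j : ℕ)
    · rw [ih j hj, mul_zero]
    · rw [hT i j, zero_mul]
      exact lt_of_lt_of_le (by omega) (le_abs_self _)

/-- In the eigenbasis `W` of `T` this says `e_kᵀ r(T) e₁ = 0` for `deg r < k - 1`: multiplication by a
tridiagonal matrix extends the support of a vector by at most one coordinate. -/
theorem sum_last_eval_first {k : ℕ} (hk : 0 < k) {T W : Matrix (Fin k) (Fin k) ℝ}
    {mu : Fin k → ℝ} (hT : IsTridiagonal T) (hW : Wᵀ * W = 1) (hW' : W * Wᵀ = 1)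
    (hTW : T = W * diagonal mu * Wᵀ) (r : ℝ[X]) (hr : r = 0 ∨ r.natDegree + 1 < k) :
    ∑ j, W ⟨k - 1, Nat.sub_lt hk Nat.one_pos⟩ j * r.eval (mu j) * W ⟨0, hk⟩ j = 0 := by
  rcases hr with rfl | hr
  · simp
  have hpow (m : ℕ) : T ^ m = W * diagonal (fun j => mu j ^ m) * Wᵀ := by
    induction m with
    | zero => simp [hW']
    | succ m ih =>
      rw [pow_succ, ih, hTW]
      calc _ = W * diagonal (fun j => mu j ^ m) * (Wᵀ * W) * diagonal mu * Wᵀ := by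
            simp only [Matrix.mul_assoc]
        _ = _ := by
            rw [hW, Matrix.mul_one, Matrix.mul_assoc W, diagonal_mul_diagonal]
            simp [pow_succ]
  have hpow0 (m : ℕ) (hm : m + 1 < k) :
      ∑ j, W ⟨k - 1, Nat.sub_lt hk Nat.one_pos⟩ j * mu j ^ m * W ⟨0, hk⟩ j = 0 := by
    have := tridiagonal_pow_apply_zero hk hT m ⟨k - 1, Nat.sub_lt hk Nat.one_pos⟩ (by simp; omega)
    rw [hpow, mul_apply] at this
    simpa [mul_diagonal] using this
  calc _ = ∑ j, ∑ m ∈ Finset.range (r.natDegree + 1), r.coeff m *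
        (W ⟨k - 1, Nat.sub_lt hk Nat.one_pos⟩ j * mu j ^ m * W ⟨0, hk⟩ j) := by
        refine Finset.sum_congr rfl fun j _ => ?_
        rw [eval_eq_sum_range, Finset.mul_sum, Finset.sum_mul]
        exact Finset.sum_congr rfl fun m _ => by ring
    _ = 0 := by
        rw [Finset.sum_comm]
        refine Finset.sum_eq_zero fun m hm => ?_
        rw [← Finset.mul_sum, hpow0 m (by have := Finset.mem_range.mp hm; omega), mul_zero]

/-- The error `p(A) q₁ - Q p(T) e₁` depends on `E` only, through the divided differences of `p`; the
rank-one term of the Lanczos relation does not contribute. -/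
theorem poly_residual {n k : ℕ} (hk : 0 < k)
    {A V : Matrix (Fin n) (Fin n) ℝ} {T W : Matrix (Fin k) (Fin k) ℝ}
    {Q E : Matrix (Fin n) (Fin k) ℝ} {qk1 : Fin n → ℝ} {β : ℝ}
    {lam : Fin n → ℝ} {mu : Fin k → ℝ}
    (hV : Vᵀ * V = 1) (hV' : V * Vᵀ = 1) (hAV : A = V * diagonal lam * Vᵀ)
    (hT : IsTridiagonal T) (hW : Wᵀ * W = 1) (hW' : W * Wᵀ = 1) (hTW : T = W * diagonal mu * Wᵀ)
    (hrel : A * Q = Q * T +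
      β • vecMulVec qk1 (Pi.single (⟨k - 1, Nat.sub_lt hk Nat.one_pos⟩ : Fin k) 1) + E)
    (p : ℝ[X]) (hdeg : p.natDegree < k) :
    V *ᵥ (diagonal (fun i => p.eval (lam i)) *ᵥ (Vᵀ *ᵥ (Q *ᵥ Pi.single ⟨0, hk⟩ 1))) -
      Q *ᵥ (W *ᵥ (diagonal (fun j => p.eval (mu j)) *ᵥ (Wᵀ *ᵥ Pi.single ⟨0, hk⟩ 1))) =
    V *ᵥ fun i => ∑ j, (p /ₘ (X - C (lam i))).eval (mu j) * W ⟨0, hk⟩ j * (Vᵀ * E * W) i j := by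
  set G := Vᵀ * Q * W with hG
  set s : Fin k → ℝ := Wᵀ *ᵥ Pi.single ⟨0, hk⟩ 1 with hs
  have hsj (j : Fin k) : s j = W ⟨0, hk⟩ j := by simp [hs]
  have h1 : Vᵀ *ᵥ (Q *ᵥ Pi.single ⟨0, hk⟩ 1) = G *ᵥ s := by
    rw [hG, hs, mulVec_mulVec, mulVec_mulVec, Matrix.mul_assoc _ W, hW', Matrix.mul_one]
  have h2 (x : Fin k → ℝ) : Q *ᵥ (W *ᵥ x) = V *ᵥ (G *ᵥ x) := by
    rw [hG, mulVec_mulVec, mulVec_mulVec, ← Matrix.mul_assoc, ← Matrix.mul_assoc, hV',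
      Matrix.one_mul]
  rw [h1, h2, ← mulVec_sub]
  congr 1
  -- The Lanczos relation conjugated to the two eigenbases.
  have hsyl : diagonal lam * G = G * diagonal mu +
      Vᵀ * (β • vecMulVec qk1 (Pi.single (⟨k - 1, Nat.sub_lt hk Nat.one_pos⟩ : Fin k) 1)) * W
      + Vᵀ * E * W := by
    have e1 : Vᵀ * (A * Q) * W = diagonal lam * G := by
      rw [hAV, hG]
      calc _ = (Vᵀ * V) * diagonal lam * Vᵀ * Q * W := by simp only [Matrix.mul_assoc]
        _ = _ := by rw [hV, Matrix.one_mul]; simp only [Matrix.mul_assoc]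
    have e2 : Vᵀ * (Q * T) * W = G * diagonal mu := by
      rw [hTW, hG]
      calc _ = Vᵀ * Q * W * diagonal mu * (Wᵀ * W) := by simp only [Matrix.mul_assoc]
        _ = _ := by rw [hW, Matrix.mul_one]
    rw [← e1, ← e2, hrel]
    simp only [Matrix.mul_add, Matrix.add_mul]
  have hsyl' (i : Fin n) (j : Fin k) : (lam i - mu j) * G i j =
      (β * (Vᵀ *ᵥ qk1) i) * W ⟨k - 1, Nat.sub_lt hk Nat.one_pos⟩ j + (Vᵀ * E * W) i j := by
    have h := congrFun (congrFun hsyl i) j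
    rw [Matrix.mul_smul, Matrix.smul_mul, mul_vecMulVec, vecMulVec_mul] at h
    simp only [diagonal_mul, mul_diagonal, Matrix.add_apply, Matrix.smul_apply, vecMulVec_apply,
      single_one_vecMul, smul_eq_mul, row_apply] at h
    linear_combination h
  ext i
  set q := p /ₘ (X - C (lam i)) with hq
  have hdec (t : ℝ) : p.eval (lam i) - p.eval t = q.eval t * (lam i - t) := by
    have := congrArg (eval t) (modByMonic_add_div p (X - C (lam i)))
    rw [modByMonic_X_sub_C_eq_C_eval] at this
    simp only [eval_add, eval_C, eval_mul, eval_sub, eval_X] at this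
    linear_combination this
  -- If `p` is constant then `q = 0`; the degree bound alone would fail for `k = 1`.
  have hq0 : q = 0 ∨ q.natDegree + 1 < k := by
    by_cases h0 : p.natDegree = 0
    · left
      rw [hq, divByMonic_eq_zero_iff (monic_X_sub_C _), degree_X_sub_C]
      exact lt_of_le_of_lt degree_le_natDegree (by simp [h0])
    · right
      rw [hq, natDegree_divByMonic _ (monic_X_sub_C _), natDegree_X_sub_C]
      omega
  have hz := sum_last_eval_first hk hT hW hW' hTW q hq0
  have hsum : (diagonal (fun i => p.eval (lam i)) *ᵥ (G *ᵥ s) -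
      G *ᵥ (diagonal (fun j => p.eval (mu j)) *ᵥ s)) i =
      ∑ j, (p.eval (lam i) - p.eval (mu j)) * (G i j * s j) := by
    rw [Pi.sub_apply, mulVec_diagonal, mulVec, mulVec, dotProduct, dotProduct, Finset.mul_sum,
      ← Finset.sum_sub_distrib]
    refine Finset.sum_congr rfl fun j _ => ?_
    rw [mulVec_diagonal]
    ring
  rw [hsum]
  calc _ = ∑ j, ((β * (Vᵀ *ᵥ qk1) i) *
          (W ⟨k - 1, Nat.sub_lt hk Nat.one_pos⟩ j * q.eval (mu j) * W ⟨0, hk⟩ j) +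
          q.eval (mu j) * W ⟨0, hk⟩ j * (Vᵀ * E * W) i j) := by
        refine Finset.sum_congr rfl fun j _ => ?_
        rw [hdec, hsj]
        linear_combination (q.eval (mu j) * W ⟨0, hk⟩ j) * hsyl' i j
    _ = _ := by rw [Finset.sum_add_distrib, ← Finset.mul_sum, hz, mul_zero, zero_add]

/-- Cauchy-Schwarz in each row, using that the row `W i₀` is a unit vector, reduces to the Frobenius norm
of `Vᵀ E W`, each of whose columns has norm at most `‖E‖`. -/
theorem vecNorm_hadamard_le {n k : ℕ} (i₀ : Fin k) {V : Matrix (Fin n) (Fin n) ℝ}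
    {W : Matrix (Fin k) (Fin k) ℝ} (E : Matrix (Fin n) (Fin k) ℝ)
    (hV' : V * Vᵀ = 1) (hW : Wᵀ * W = 1) (hW' : W * Wᵀ = 1) (D : Fin n → Fin k → ℝ) {b : ℝ}
    (hb : 0 ≤ b) (hD : ∀ i j, D i j ^ 2 ≤ b ^ 2) :
    vecNorm (fun i => ∑ j, D i j * W i₀ j * (Vᵀ * E * W) i j) ≤ b * (√k * matNorm E) := by
  have hrow : ∑ j, W i₀ j ^ 2 = 1 := by
    have := congrFun (congrFun hW' i₀) i₀
    simpa [mul_apply, sq] using this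
  have hcol (j : Fin k) : ∑ i, (Vᵀ * E * W) i j ^ 2 ≤ matNorm E ^ 2 := by
    have h1 : (fun i => (Vᵀ * E * W) i j) = Vᵀ *ᵥ (E *ᵥ (W *ᵥ Pi.single j 1)) := by
      rw [mulVec_mulVec, mulVec_mulVec, mulVec_single_one]
      rw [Matrix.mul_assoc]
      rfl
    rw [← vecNorm_sq fun i => (Vᵀ * E * W) i j, h1, vecNorm_orth (by rwa [transpose_transpose])]
    refine pow_le_pow_left₀ (vecNorm_nonneg _) (vecNorm_mulVec_le_matNorm E ?_) 2
    rw [vecNorm_orth hW]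
    simp [vecNorm, Pi.single_apply]
  refine vecNorm_le_of_sq (by positivity [matNorm_nonneg E]) ?_
  calc _ ≤ ∑ i, (∑ j, (D i j * (Vᵀ * E * W) i j) ^ 2) * ∑ j, W i₀ j ^ 2 := by
        refine Finset.sum_le_sum fun i _ => ?_
        refine le_trans (le_of_eq ?_) (Finset.sum_mul_sq_le_sq_mul_sq _ _ _)
        congr 1
        exact Finset.sum_congr rfl fun j _ => by ring
    _ ≤ ∑ i, ∑ j, b ^ 2 * (Vᵀ * E * W) i j ^ 2 := by
        refine Finset.sum_le_sum fun i _ => ?_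
        rw [hrow, mul_one]
        refine Finset.sum_le_sum fun j _ => ?_
        rw [mul_pow]
        exact mul_le_mul_of_nonneg_right (hD i j) (sq_nonneg _)
    _ = b ^ 2 * ∑ j, ∑ i, (Vᵀ * E * W) i j ^ 2 := by
        rw [Finset.sum_comm, Finset.mul_sum]
        simp_rw [Finset.mul_sum]
    _ ≤ b ^ 2 * ∑ _j : Fin k, matNorm E ^ 2 := by
        gcongr with j
        exact hcol j
    _ = _ := by
        rw [mul_pow, mul_pow, Real.sq_sqrt (Nat.cast_nonneg k)]
        simp

/-! ### The stability bound -/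

/-- Stable function approximation via finite-precision Lanczos: under Paige-type
bounds on the error matrix `E` and the columns of `Q`, with all eigenvalues of `T` in
`[λmin(A) - η, λmax(A) + η]`, `|f| ≤ C` on that interval, and `|f - p| ≤ δ ≤ C` on that
interval for a polynomial `p` of degree `< k`,
`‖f(A)·q₁ - Q·f(T)·e₁‖ ≤ (k+2)δ + ε·(41 C k⁴ n^{3/2} ‖A‖)/η`. -/
theorem lanczos_stable_function_approximation
    {n k : ℕ} (hk : 0 < k)
    (A : Matrix (Fin n) (Fin n) ℝ) (Q : Matrix (Fin n) (Fin k) ℝ)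
    (qk1 : Fin n → ℝ) (β : ℝ) (E : Matrix (Fin n) (Fin k) ℝ) (T : Matrix (Fin k) (Fin k) ℝ)
    (hA : A.IsHermitian) (hT : T.IsHermitian) (hTtri : IsTridiagonal T)
    (hrel : A * Q = Q * T +
      β • Matrix.vecMulVec qk1 (Pi.single (⟨k - 1, Nat.sub_lt hk Nat.one_pos⟩ : Fin k) 1) + E)
    (ε : ℝ) (hε : 0 < ε) (hεn : ε * ((n : ℝ) + 4) ≤ 1)
    (hE : matNorm E ≤ (k : ℝ) * (2 * (n : ℝ) ^ ((3 : ℝ) / 2) + 7) * matNorm A * ε)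
    (hQcol : ∀ j : Fin k, vecNorm (fun i => Q i j) ≤ 1 + ((n : ℝ) + 4) * ε)
    (η : ℝ) (hη : 0 < η) (hηA : η ≤ matNorm A)
    (hTeig : ∀ (μ : ℝ) (v : Fin k → ℝ), v ≠ 0 → T.mulVec v = μ • v →
      μ ∈ Set.Icc (lmin A - η) (lmax A + η))
    (C : ℝ) (hC : 0 ≤ C) (f : ℝ → ℝ)
    (hf : ∀ t ∈ Set.Icc (lmin A - η) (lmax A + η), |f t| ≤ C)
    (p : Polynomial ℝ) (hdeg : p.natDegree < k) (δ : ℝ) (hδC : δ ≤ C)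
    (hfp : ∀ t ∈ Set.Icc (lmin A - η) (lmax A + η), |f t - p.eval t| ≤ δ) :
    vecNorm ((matFun hA f).mulVec (Q.mulVec (Pi.single (⟨0, hk⟩ : Fin k) 1)) -
        Q.mulVec ((matFun hT f).mulVec (Pi.single (⟨0, hk⟩ : Fin k) 1))) ≤
      ((k : ℝ) + 2) * δ +
        ε * (41 * C * (k : ℝ) ^ 4 * (n : ℝ) ^ ((3 : ℝ) / 2) * matNorm A) / η := by
  obtain ⟨V, lam, hV, hV', hAV, hfA, hAeig⟩ := exists_eigenbasis hA
  obtain ⟨W, mu, hW, hW', hTW, hfT, hTspec⟩ := exists_eigenbasis hT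
  have hE0 := matNorm_nonneg E
  have ha : 0 < matNorm A := hη.trans_le hηA
  -- For `n = 0` the norm of `A` vanishes, contradicting `0 < η ≤ ‖A‖`.
  have hn : 0 < n := by
    rcases Nat.eq_zero_or_pos n with rfl | h
    · exfalso
      refine ha.not_ge (csSup_le ⟨_, 0, by simp [vecNorm], rfl⟩ ?_)
      rintro _ ⟨v, -, rfl⟩
      simp [vecNorm]
    · exact h
  have hlam (i : Fin n) : lmin A ≤ lam i ∧ lam i ≤ lmax A := by
    rw [lmin, lmax, hAeig]
    exact ⟨csInf_le (Set.finite_range lam).bddBelow ⟨i, rfl⟩,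
      le_csSup (Set.finite_range lam).bddAbove ⟨i, rfl⟩⟩
  have hlamI (i : Fin n) : lam i ∈ Icc (lmin A - η) (lmax A + η) :=
    ⟨by linarith [(hlam i).1], by linarith [(hlam i).2]⟩
  have hmuI (j : Fin k) : mu j ∈ Icc (lmin A - η) (lmax A + η) := by
    have hj : mu j ∈ {μ : ℝ | ∃ v : Fin k → ℝ, v ≠ 0 ∧ T.mulVec v = μ • v} := by
      rw [hTspec]; exact ⟨j, rfl⟩
    obtain ⟨v, hv, h⟩ := hj
    exact hTeig _ v hv h
  have hδ : 0 ≤ δ := (abs_nonneg _).trans (hfp _ (hlamI ⟨0, hn⟩))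
  have hwidth : 2 * η ≤ (lmax A + η) - (lmin A - η) := by
    linarith [(hlam ⟨0, hn⟩).1, (hlam ⟨0, hn⟩).2]
  have hpM : ∀ t ∈ Icc (lmin A - η) (lmax A + η), |p.eval t| ≤ 2 * C := by
    intro t ht
    have h1 := abs_le.mp (hf t ht)
    have h2 := abs_le.mp (hfp t ht)
    rw [abs_le]
    constructor <;> linarith [h1.1, h1.2, h2.1, h2.2]
  set e₁ : Fin k → ℝ := Pi.single ⟨0, hk⟩ 1 with he₁
  have hne : vecNorm e₁ = 1 := by simp [he₁, vecNorm, Pi.single_apply]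
  have hns : vecNorm (Wᵀ *ᵥ e₁) = 1 := by
    rw [vecNorm_orth (by rwa [transpose_transpose]), hne]
  set x : ℝ := ((n : ℝ) + 4) * ε with hx
  have hx0 : 0 ≤ x := by positivity
  have hnq : vecNorm (Vᵀ *ᵥ (Q *ᵥ e₁)) ≤ 1 + x := by
    rw [vecNorm_orth (by rwa [transpose_transpose]), he₁, mulVec_single_one]
    exact hQcol _
  have hdecomp : (matFun hA f).mulVec (Q *ᵥ e₁) - Q *ᵥ ((matFun hT f).mulVec e₁) =
      V *ᵥ (diagonal (fun i => f (lam i) - p.eval (lam i)) *ᵥ (Vᵀ *ᵥ (Q *ᵥ e₁))) +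
      (V *ᵥ fun i => ∑ j, (p /ₘ (X - Polynomial.C (lam i))).eval (mu j) * W ⟨0, hk⟩ j *
        (Vᵀ * E * W) i j) +
      Q *ᵥ (W *ᵥ (diagonal (fun j => p.eval (mu j) - f (mu j)) *ᵥ (Wᵀ *ᵥ e₁))) := by
    rw [← poly_residual hk hV hV' hAV hTtri hW hW' hTW hrel p hdeg, hfA, hfT, ← he₁]
    have hd (m : ℕ) (u w : Fin m → ℝ) : diagonal (fun i => u i - w i) =
        diagonal u - diagonal w := (diagonal_sub u w).symm
    rw [hd _ (fun i => f (lam i)), hd _ (fun j => p.eval (mu j))]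
    simp only [sub_mulVec, mulVec_sub, ← mulVec_mulVec]
    simp only [Function.comp_def]
    abel
  have h1 : vecNorm (V *ᵥ (diagonal (fun i => f (lam i) - p.eval (lam i)) *ᵥ
      (Vᵀ *ᵥ (Q *ᵥ e₁)))) ≤ δ * (1 + x) := by
    rw [vecNorm_orth hV]
    exact (vecNorm_diagonal_le hδ (fun i => hfp _ (hlamI i)) _).trans
      (mul_le_mul_of_nonneg_left hnq hδ)
  have h3 : vecNorm (Q *ᵥ (W *ᵥ (diagonal (fun j => p.eval (mu j) - f (mu j)) *ᵥ
      (Wᵀ *ᵥ e₁)))) ≤ √k * (1 + x) * δ := by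
    refine (vecNorm_mulVec_le_of_col (by positivity) hQcol _).trans ?_
    refine mul_le_mul_of_nonneg_left ?_ (by positivity)
    rw [vecNorm_orth hW]
    refine (vecNorm_diagonal_le hδ (fun j => ?_) _).trans (by rw [hns, mul_one])
    rw [abs_sub_comm]
    exact hfp _ (hmuI j)
  have hkR : (1 : ℝ) ≤ k := by exact_mod_cast hk
  have hsk : √(k : ℝ) ^ 2 = k := Real.sq_sqrt (Nat.cast_nonneg k)
  have hsk0 : 0 ≤ √(k : ℝ) := Real.sqrt_nonneg _
  have h2 : vecNorm (V *ᵥ fun i => ∑ j, (p /ₘ (X - Polynomial.C (lam i))).eval (mu j) *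
      W ⟨0, hk⟩ j * (Vᵀ * E * W) i j) ≤ 3 * C * k ^ 3 * matNorm E / η := by
    rw [vecNorm_orth hV]
    refine (vecNorm_hadamard_le ⟨0, hk⟩ E hV' hW hW'
      (fun i j => (p /ₘ (X - Polynomial.C (lam i))).eval (mu j))
      (b := 3 * C * k ^ 2 * √k / η) (by positivity) (fun i j => ?_)).trans (le_of_eq ?_)
    · refine (divByMonic_sq_le p k hdeg (2 * C) _ _ η hη hwidth hpM _ _ (hlamI i)
        (hmuI j)).trans ?_
      rw [div_pow, mul_pow _ (√(k : ℝ)), hsk]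
      refine div_le_div_of_nonneg_right ?_ (sq_nonneg η)
      have : 0 ≤ C ^ 2 * (k : ℝ) ^ 5 := by positivity
      nlinarith
    · calc _ = 3 * C * k ^ 2 * √(k : ℝ) ^ 2 * matNorm E / η := by ring
        _ = _ := by rw [hsk]; ring
  rw [hdecomp]
  refine (vecNorm_add_le _ _).trans ((add_le_add ((vecNorm_add_le _ _).trans
    (add_le_add h1 h2)) h3).trans ?_)
  have hnR : (1 : ℝ) ≤ n := by exact_mod_cast hn
  set N : ℝ := (n : ℝ) ^ ((3 : ℝ) / 2) with hN
  have hnN : (n : ℝ) ≤ N := by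
    simpa using Real.rpow_le_rpow_of_exponent_le hnR (by norm_num : (1 : ℝ) ≤ 3 / 2)
  have hN1 : 1 ≤ N := hnR.trans hnN
  have hskk : √(k : ℝ) ≤ k := by nlinarith
  have hEb : matNorm E ≤ k * (9 * N) * matNorm A * ε := by
    refine hE.trans ?_
    gcongr
    linarith
  have hmid : 3 * C * k ^ 3 * matNorm E / η ≤ 27 * (ε * C * k ^ 4 * N * matNorm A / η) := by
    calc _ ≤ 3 * C * k ^ 3 * (k * (9 * N) * matNorm A * ε) / η := by gcongr
      _ = _ := by ring
  have hround : x * (1 + √k) * δ ≤ 10 * (ε * C * k ^ 4 * N * matNorm A / η) := by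
    have hratio : 1 ≤ matNorm A / η := by rwa [one_le_div hη]
    have hk4 : (k : ℝ) ≤ k ^ 4 := le_self_pow₀ hkR (by norm_num)
    calc x * (1 + √k) * δ ≤ (5 * N * ε) * (2 * k) * C := by
          refine mul_le_mul (mul_le_mul ?_ (by linarith) (by positivity) (by positivity)) hδC hδ
            (by positivity)
          exact mul_le_mul_of_nonneg_right (by linarith) hε.le
      _ = 10 * (ε * C * k * N * 1) := by ring
      _ ≤ 10 * (ε * C * k ^ 4 * N * (matNorm A / η)) := by gcongr
      _ = _ := by ring
  have hmain : (1 + √k) * δ ≤ (k + 2) * δ := by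
    apply mul_le_mul_of_nonneg_right _ hδ
    linarith
  have hpos : 0 ≤ ε * C * k ^ 4 * N * matNorm A / η := by positivity
  have hgoal : ε * (41 * C * (k : ℝ) ^ 4 * N * matNorm A) / η =
      41 * (ε * C * k ^ 4 * N * matNorm A / η) := by ring
  rw [hgoal]
  linarith
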